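/- GMLC ≤ GNN_b^ACR: for every graded modal logic with counting (GMLC) classifier φ of dimension d there exists a GNN classifier N_φ in GNN_b^ACR of dimension d such that for every pointed graph (G,v) of dimension d, N_φ(G,v) = true if and only if (M_G,v) ⊨ φ. -/

import Mathlib

/-! The formula is evaluated by a straight-line program with one GNN layer per instruction.
A program is a sequence `ψ 0, ψ 1, …` of formulas that starts with the propositions
`p_1, …, p_d` and in which every later entry arises from earlier entries by one connective
(`IsProgram`); every formula occurs in some program (`exists_isProgram`). Layer `ℓ` has input
dimension `d + ℓ` and output dimension `d + ℓ + 1`: it keeps the truth values of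
`ψ 0, …, ψ (d + ℓ - 1)` and appends the truth value of `ψ (d + ℓ)` (`exists_layer`). The graded
modalities `◇_k` and `∃_k` are computed by the aggregation and the readout that test whether at
least `k` labels, with multiplicity, satisfy a property. Such a test is `k`-bounded
(`kBounded_threshold`): either some label with the property occurs at least `k` times, and
then it still does after capping, or capping changes nothing among the labels with the
property. -/

attribute [local instance] Classical.propDecidable

noncomputable section

/-! ## Multisets with capped multiplicities, and bounded aggregation functions -/

/-- The multiset obtained from `M` by replacing every multiplicity greater than `k` by `k`. -/
def Multiset.capAt {α : Type*} (k : ℕ) (M : Multiset α) : Multiset α :=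
  haveI := Classical.decEq α
  M.toFinset.val.bind fun a => Multiset.replicate (min (M.count a) k) a

/-- A function on multisets is `k`-bounded if its value on any multiset agrees with its value
on the multiset with all multiplicities capped at `k`. -/
def KBounded {α β : Type*} (k : ℕ) (f : Multiset α → β) : Prop :=
  ∀ M : Multiset α, f M = f (M.capAt k)

/-- A function on multisets is bounded if it is `k`-bounded for some `k`;
it is set-based if it is `1`-bounded. -/
def BoundedAgg {α β : Type*} (f : Multiset α → β) : Prop :=
  ∃ k : ℕ, KBounded k f

/-! ## Finite undirected simple node-labelled graphs -/

structure LGraph (d : ℕ) where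
  n : ℕ
  adj : Fin n → Fin n → Prop
  symm : ∀ u v, adj u v → adj v u
  irrefl : ∀ v, ¬ adj v v
  label : Fin n → Fin d → Bool

/-- The neighbours of a node. -/
def LGraph.nbrs {d : ℕ} (G : LGraph d) (v : Fin G.n) : Finset (Fin G.n) :=
  Finset.univ.filter fun w => G.adj v w

/-- The non-neighbours of a node (excluding the node itself). -/
def LGraph.conbrs {d : ℕ} (G : LGraph d) (v : Fin G.n) : Finset (Fin G.n) :=
  Finset.univ.filter fun w => ¬ G.adj v w ∧ w ≠ v

/-! ## GNN classifiers -/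

/-- The kind of the layers of a GNN: aggregate-combine (`AC`),
aggregate-combine-readout (`ACR`), or extended aggregate-combine (`ACP`, i.e. `AC+`). -/
inductive GNNKind : Type
  | AC | ACR | ACP

/-- A GNN layer from dimension `din` to dimension `dout`: an aggregation function `agg`
(over neighbours), an auxiliary aggregation/readout function `aux` (fed the empty multiset in
`AC` layers, the multiset of all node labels in `ACR` layers, and the multiset of labels of
non-neighbours in `AC+` layers), and a combination function `comb`. -/
structure GNNLayer (din dout : ℕ) where
  m₁ : ℕ
  m₂ : ℕ
  agg : Multiset (Fin din → ℝ) → Fin m₁ → ℝ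
  aux : Multiset (Fin din → ℝ) → Fin m₂ → ℝ
  comb : (Fin din → ℝ) → (Fin m₁ → ℝ) → (Fin m₂ → ℝ) → Fin dout → ℝ

/-- A GNN classifier of dimension `d` with `L` layers of matching dimensions and a
classification function `cls`. -/
structure GNN (d : ℕ) where
  kind : GNNKind
  L : ℕ
  dims : ℕ → ℕ
  dims_zero : dims 0 = d
  layer : (ℓ : ℕ) → ℓ < L → GNNLayer (dims ℓ) (dims (ℓ + 1))
  cls : (Fin (dims L) → ℝ) → Bool

/-- The set of nodes whose labels are fed to the second aggregation function `aux`. -/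
def GNN.auxSet {d : ℕ} (N : GNN d) (G : LGraph d) (v : Fin G.n) : Finset (Fin G.n) :=
  match N.kind with
  | GNNKind.AC => ∅
  | GNNKind.ACR => Finset.univ
  | GNNKind.ACP => G.conbrs v

/-- The labelling of the nodes of `G` after `ℓ` layers of `N` have been applied. -/
def GNN.labelAt {d : ℕ} (N : GNN d) (G : LGraph d) : (ℓ : ℕ) → Fin G.n → Fin (N.dims ℓ) → ℝ
  | 0 => fun v i => if G.label v (Fin.cast N.dims_zero i) = true then 1 else 0
  | ℓ + 1 => fun v =>
      if h : ℓ < N.L then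
        (N.layer ℓ h).comb (N.labelAt G ℓ v)
          ((N.layer ℓ h).agg ((G.nbrs v).val.map fun w => N.labelAt G ℓ w))
          ((N.layer ℓ h).aux ((N.auxSet G v).val.map fun w => N.labelAt G ℓ w))
      else fun _ => 0

/-- The output of the GNN classifier `N` on the pointed graph `(G, v)`. -/
def GNN.eval {d : ℕ} (N : GNN d) (G : LGraph d) (v : Fin G.n) : Bool :=
  N.cls (N.labelAt G N.L v)

/-- The spectrum of `N` at layer `ℓ`: by convention, at layer `0` it is the set of Boolean
vectors of the dimension of `N`; at layer `ℓ + 1` it is the set of vectors that can occur as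
node labels upon application of layer `ℓ + 1` in applications of `N` to graphs. -/
def GNN.spec {d : ℕ} (N : GNN d) : (ℓ : ℕ) → Set (Fin (N.dims ℓ) → ℝ)
  | 0 => {x | ∀ i, x i = 0 ∨ x i = 1}
  | ℓ + 1 => {x | ∃ (G : LGraph d) (v : Fin G.n), N.labelAt G (ℓ + 1) v = x}

/-! ## Modal formulas (GMLC and its fragments GML, ML(E), ML) -/

inductive MForm (d : ℕ) : Type
  | prop : Fin d → MForm d
  | neg : MForm d → MForm d
  | and : MForm d → MForm d → MForm d
  | dia : ℕ → MForm d → MForm d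
  | glob : ℕ → MForm d → MForm d

namespace MForm

/-- Modal depth. -/
def depth {d : ℕ} : MForm d → ℕ
  | prop _ => 0
  | neg φ => depth φ
  | and φ ψ => max (depth φ) (depth ψ)
  | dia _ φ => depth φ + 1
  | glob _ φ => depth φ + 1

/-- Counting rank. -/
def rank {d : ℕ} : MForm d → ℕ
  | prop _ => 0
  | neg φ => rank φ
  | and φ ψ => max (rank φ) (rank ψ)
  | dia k φ => max k (rank φ)
  | glob k φ => max k (rank φ)

/-- Graded modal logic: no global modalities, grades are positive. -/
def IsGML {d : ℕ} : MForm d → Prop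
  | prop _ => True
  | neg φ => IsGML φ
  | and φ ψ => IsGML φ ∧ IsGML ψ
  | dia k φ => 1 ≤ k ∧ IsGML φ
  | glob _ _ => False

/-- Basic modal logic: no global modalities, all graded modalities are `◇₁`. -/
def IsML {d : ℕ} : MForm d → Prop
  | prop _ => True
  | neg φ => IsML φ
  | and φ ψ => IsML φ ∧ IsML ψ
  | dia k φ => k = 1 ∧ IsML φ
  | glob _ _ => False

/-- Graded modal logic with counting: grades are positive. -/
def IsGMLC {d : ℕ} : MForm d → Prop
  | prop _ => True
  | neg φ => IsGMLC φ
  | and φ ψ => IsGMLC φ ∧ IsGMLC ψ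
  | dia k φ => 1 ≤ k ∧ IsGMLC φ
  | glob k φ => 1 ≤ k ∧ IsGMLC φ

/-- Modal logic with the global modality: all modalities are `◇₁` or `∃₁`. -/
def IsMLE {d : ℕ} : MForm d → Prop
  | prop _ => True
  | neg φ => IsMLE φ
  | and φ ψ => IsMLE φ ∧ IsMLE ψ
  | dia k φ => k = 1 ∧ IsMLE φ
  | glob k φ => k = 1 ∧ IsMLE φ

/-- A tautology (needs a proposition to exist). -/
def top {d : ℕ} (hd : 0 < d) : MForm d :=
  neg (and (prop ⟨0, hd⟩) (neg (prop ⟨0, hd⟩)))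

/-- Conjunction of a list of formulas (the empty conjunction is a tautology). -/
def conjList {d : ℕ} (hd : 0 < d) : List (MForm d) → MForm d
  | [] => top hd
  | [φ] => φ
  | φ :: ψ :: rest => and φ (conjList hd (ψ :: rest))

end MForm

/-! ## Finite pointed Kripke models -/

structure KModel (d : ℕ) where
  W : Type
  fintype : Fintype W
  R : W → W → Prop
  symm : ∀ u v, R u v → R v u
  irrefl : ∀ v, ¬ R v v
  val : W → Fin d → Prop

/-- Satisfaction of modal formulas. -/
def KModel.sat {d : ℕ} (M : KModel d) : M.W → MForm d → Prop
  | v, MForm.prop p => M.val v p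
  | v, MForm.neg φ => ¬ M.sat v φ
  | v, MForm.and φ ψ => M.sat v φ ∧ M.sat v ψ
  | v, MForm.dia k φ => k ≤ Nat.card {w : M.W // M.R v w ∧ M.sat w φ}
  | v, MForm.glob k φ => k ≤ Nat.card {w : M.W // M.sat w φ}

/-- A list enumerating the worlds of a finite Kripke model. -/
def KModel.worldList {d : ℕ} (M : KModel d) : List M.W :=
  haveI := M.fintype
  Finset.univ.toList

/-- The Kripke model associated with a node-labelled graph. -/
def LGraph.toKModel {d : ℕ} (G : LGraph d) : KModel d where
  W := Fin G.n
  fintype := inferInstance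
  R := G.adj
  symm := G.symm
  irrefl := G.irrefl
  val := fun v p => G.label v p = true

/-! ## Graded bisimulation games -/

/-- `GBisim c ℓ M v M' v'` holds iff Duplicator has a winning strategy in the `ℓ`-round
`c`-graded bisimulation game starting from configuration `(M, v, M', v')`. -/
def GBisim {d : ℕ} (c : ℕ) : (ℓ : ℕ) → (M : KModel d) → M.W → (M' : KModel d) → M'.W → Prop
  | 0, M, v, M', v' => ∀ p, M.val v p ↔ M'.val v' p
  | ℓ + 1, M, v, M', v' =>
      (∀ p, M.val v p ↔ M'.val v' p) ∧
      (∀ U₁ : Finset M.W, U₁.Nonempty → U₁.card ≤ c → (∀ u ∈ U₁, M.R v u) →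
        ∃ U₂ : Finset M'.W, U₂.card = U₁.card ∧ (∀ u ∈ U₂, M'.R v' u) ∧
          ∀ u₂ ∈ U₂, ∃ u₁ ∈ U₁, GBisim c ℓ M u₁ M' u₂) ∧
      (∀ U₁ : Finset M'.W, U₁.Nonempty → U₁.card ≤ c → (∀ u ∈ U₁, M'.R v' u) →
        ∃ U₂ : Finset M.W, U₂.card = U₁.card ∧ (∀ u ∈ U₂, M.R v u) ∧
          ∀ u₂ ∈ U₂, ∃ u₁ ∈ U₁, GBisim c ℓ M u₂ M' u₁)

/-- `GBisimG c ℓ M v M' v'` holds iff Duplicator has a winning strategy in the `ℓ`-round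
`c`-graded *global* bisimulation game starting from configuration `(M, v, M', v')`:
Spoiler may additionally play global rounds, selecting worlds anywhere in one model. -/
def GBisimG {d : ℕ} (c : ℕ) : (ℓ : ℕ) → (M : KModel d) → M.W → (M' : KModel d) → M'.W → Prop
  | 0, M, v, M', v' => ∀ p, M.val v p ↔ M'.val v' p
  | ℓ + 1, M, v, M', v' =>
      (∀ p, M.val v p ↔ M'.val v' p) ∧
      (∀ U₁ : Finset M.W, U₁.Nonempty → U₁.card ≤ c → (∀ u ∈ U₁, M.R v u) →
        ∃ U₂ : Finset M'.W, U₂.card = U₁.card ∧ (∀ u ∈ U₂, M'.R v' u) ∧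
          ∀ u₂ ∈ U₂, ∃ u₁ ∈ U₁, GBisimG c ℓ M u₁ M' u₂) ∧
      (∀ U₁ : Finset M'.W, U₁.Nonempty → U₁.card ≤ c → (∀ u ∈ U₁, M'.R v' u) →
        ∃ U₂ : Finset M.W, U₂.card = U₁.card ∧ (∀ u ∈ U₂, M.R v u) ∧
          ∀ u₂ ∈ U₂, ∃ u₁ ∈ U₁, GBisimG c ℓ M u₂ M' u₁) ∧
      (∀ U₁ : Finset M.W, U₁.Nonempty → U₁.card ≤ c →
        ∃ U₂ : Finset M'.W, U₂.card = U₁.card ∧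
          ∀ u₂ ∈ U₂, ∃ u₁ ∈ U₁, GBisimG c ℓ M u₁ M' u₂) ∧
      (∀ U₁ : Finset M'.W, U₁.Nonempty → U₁.card ≤ c →
        ∃ U₂ : Finset M.W, U₂.card = U₁.card ∧
          ∀ u₂ ∈ U₂, ∃ u₁ ∈ U₁, GBisimG c ℓ M u₂ M' u₁)

/-! ## Characteristic formulas -/

/-- The conjunction of all propositions true at `v` and of the negations of all
propositions false at `v`. -/
def atomDesc {d : ℕ} (hd : 0 < d) (M : KModel d) (v : M.W) : MForm d :=
  MForm.conjList hd ((List.finRange d).map fun p =>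
    if M.val v p then MForm.prop p else MForm.neg (MForm.prop p))

/-- `|U^n_{v,w}|`: the number of neighbours `u` of `v` with `(M,u) ∼_{n,c} (M,w)`. -/
def USet {d : ℕ} (c n : ℕ) (M : KModel d) (v w : M.W) : ℕ :=
  Nat.card {u : M.W // M.R v u ∧ GBisim c n M u M w}

/-- The characteristic formula `φ^{ℓ,c}_{[M,v]}` of a finite pointed Kripke model for GML. -/
def charF {d : ℕ} (hd : 0 < d) (c : ℕ) (M : KModel d) : ℕ → M.W → MForm d
  | 0, v => atomDesc hd M v
  | n + 1, v =>
      MForm.conjList hd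
        ([atomDesc hd M v] ++
         ((M.worldList.filter fun w => decide (M.R v w)).flatMap fun w =>
            ((List.range c).map (· + 1)).filterMap fun k =>
              if k ≤ min (USet c n M v w) c then some (MForm.dia k (charF hd c M n w))
              else none) ++
         ((M.worldList.filter fun w => decide (M.R v w)).flatMap fun w =>
            ((List.range c).map (· + 1)).filterMap fun k =>
              if USet c n M v w < k ∧ k ≤ c then
                some (MForm.neg (MForm.dia k (charF hd c M n w)))
              else none) ++
         [MForm.neg (MForm.dia 1 (MForm.conjList hd
            ((M.worldList.filter fun w => decide (M.R v w)).map fun w =>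
              MForm.neg (charF hd c M n w))))])

/-- `|U^n_{v,w}|` for the global game. -/
def USetG {d : ℕ} (c n : ℕ) (M : KModel d) (v w : M.W) : ℕ :=
  Nat.card {u : M.W // M.R v u ∧ GBisimG c n M u M w}

/-- `|J^n_w|`: the number of worlds `u` with `(M,u) ∼^∃_{n,c} (M,w)`. -/
def JSetG {d : ℕ} (c n : ℕ) (M : KModel d) (w : M.W) : ℕ :=
  Nat.card {u : M.W // GBisimG c n M u M w}

/-- The global characteristic formula `φ^{ℓ,c}_{∃[M,v]}` for GMLC. -/
def charG {d : ℕ} (hd : 0 < d) (c : ℕ) (M : KModel d) : ℕ → M.W → MForm d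
  | 0, v => atomDesc hd M v
  | n + 1, v =>
      MForm.conjList hd
        ([atomDesc hd M v] ++
         ((M.worldList.filter fun w => decide (M.R v w)).flatMap fun w =>
            ((List.range c).map (· + 1)).filterMap fun k =>
              if k ≤ min (USetG c n M v w) c then some (MForm.dia k (charG hd c M n w))
              else none) ++
         ((M.worldList.filter fun w => decide (M.R v w)).flatMap fun w =>
            ((List.range c).map (· + 1)).filterMap fun k =>
              if USetG c n M v w < k ∧ k ≤ c then
                some (MForm.neg (MForm.dia k (charG hd c M n w)))
              else none) ++
         (M.worldList.flatMap fun w =>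
            ((List.range c).map (· + 1)).filterMap fun k =>
              if k ≤ min (JSetG c n M w) c then some (MForm.glob k (charG hd c M n w))
              else none) ++
         (M.worldList.flatMap fun w =>
            ((List.range c).map (· + 1)).filterMap fun k =>
              if JSetG c n M w < k ∧ k ≤ c then
                some (MForm.neg (MForm.glob k (charG hd c M n w)))
              else none) ++
         [MForm.neg (MForm.dia 1 (MForm.conjList hd
            ((M.worldList.filter fun w => decide (M.R v w)).map fun w =>
              MForm.neg (charG hd c M n w)))),
          MForm.neg (MForm.glob 1 (MForm.conjList hd
            (M.worldList.map fun w => MForm.neg (charG hd c M n w))))])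

/-! ## Two-variable first-order logic with counting quantifiers (C²) -/

/-- C² formulas over unary predicates `p₁, …, p_d` and one binary relation `E`, with the two
variables represented by `Bool` (`false` is the distinguished free variable `x`). -/
inductive C2Form (d : ℕ) : Type
  | prop : Fin d → Bool → C2Form d
  | edge : Bool → Bool → C2Form d
  | eq : Bool → Bool → C2Form d
  | neg : C2Form d → C2Form d
  | and : C2Form d → C2Form d → C2Form d
  | exC : ℕ → Bool → C2Form d → C2Form d

namespace C2Form

/-- Quantifier depth. -/
def depth {d : ℕ} : C2Form d → ℕ
  | prop _ _ => 0
  | edge _ _ => 0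
  | eq _ _ => 0
  | neg φ => depth φ
  | and φ ψ => max (depth φ) (depth ψ)
  | exC _ _ φ => depth φ + 1

/-- Counting rank. -/
def rank {d : ℕ} : C2Form d → ℕ
  | prop _ _ => 0
  | edge _ _ => 0
  | eq _ _ => 0
  | neg φ => rank φ
  | and φ ψ => max (rank φ) (rank ψ)
  | exC k _ φ => max k (rank φ)

/-- Well-formed C² formulas: all counting indices are positive. -/
def IsC2 {d : ℕ} : C2Form d → Prop
  | prop _ _ => True
  | edge _ _ => True
  | eq _ _ => True
  | neg φ => IsC2 φ
  | and φ ψ => IsC2 φ ∧ IsC2 ψ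
  | exC k _ φ => 1 ≤ k ∧ IsC2 φ

/-- FO² formulas: all counting quantifiers are with `k = 1`, i.e. ordinary `∃`. -/
def IsFO2 {d : ℕ} : C2Form d → Prop
  | prop _ _ => True
  | edge _ _ => True
  | eq _ _ => True
  | neg φ => IsFO2 φ
  | and φ ψ => IsFO2 φ ∧ IsFO2 ψ
  | exC k _ φ => k = 1 ∧ IsFO2 φ

/-- The set of free variables of a formula. -/
def free {d : ℕ} : C2Form d → Set Bool
  | prop _ b => {b}
  | edge b₁ b₂ => {b₁, b₂}
  | eq b₁ b₂ => {b₁, b₂}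
  | neg φ => free φ
  | and φ ψ => free φ ∪ free ψ
  | exC _ b φ => free φ \ {b}

end C2Form

/-- A finite first-order structure over the signature with unary predicates `p₁, …, p_d`
and one binary relation `E`. -/
structure FOModel (d : ℕ) where
  W : Type
  fintype : Fintype W
  E : W → W → Prop
  val : W → Fin d → Prop

/-- First-order satisfaction of C² formulas under an assignment of the two variables. -/
def FOModel.sat {d : ℕ} (M : FOModel d) : (Bool → M.W) → C2Form d → Prop
  | a, C2Form.prop p b => M.val (a b) p
  | a, C2Form.edge b₁ b₂ => M.E (a b₁) (a b₂)
  | a, C2Form.eq b₁ b₂ => a b₁ = a b₂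
  | a, C2Form.neg φ => ¬ M.sat a φ
  | a, C2Form.and φ ψ => M.sat a φ ∧ M.sat a ψ
  | a, C2Form.exC k b φ => k ≤ Nat.card {w : M.W // M.sat (Function.update a b w) φ}

/-- The first-order structure associated with a node-labelled graph. -/
def LGraph.toFOModel {d : ℕ} (G : LGraph d) : FOModel d where
  W := Fin G.n
  fintype := inferInstance
  E := G.adj
  val := fun v p => G.label v p = true

/-! ## Two-pebble graded games -/

/-- The positions of the pebbles (pair 1 placed, pair 2 possibly unplaced) form a partial
isomorphism between `M` and `M'`. -/
def PIso {d : ℕ} (M M' : FOModel d) (p₁ : M.W × M'.W) (p₂ : Option (M.W × M'.W)) : Prop :=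
  ((∀ q, M.val p₁.1 q ↔ M'.val p₁.2 q) ∧ (M.E p₁.1 p₁.1 ↔ M'.E p₁.2 p₁.2)) ∧
  ∀ x ∈ p₂,
    (∀ q, M.val x.1 q ↔ M'.val x.2 q) ∧ (M.E x.1 x.1 ↔ M'.E x.2 x.2) ∧
    (p₁.1 = x.1 ↔ p₁.2 = x.2) ∧
    (M.E p₁.1 x.1 ↔ M'.E p₁.2 x.2) ∧ (M.E x.1 p₁.1 ↔ M'.E x.2 p₁.2)

/-- Update the configuration by moving pebble pair `i` (`false` = pair 1, `true` = pair 2)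
to the given pair of worlds. -/
def updCfg {α β : Type*} (p₁ : α × β) (p₂ : Option (α × β)) :
    Bool → α × β → (α × β) × Option (α × β)
  | false, x => (x, p₂)
  | true, x => (p₁, some x)

/-- `PebbleWin c M M' ℓ p₁ p₂` holds iff Duplicator has a winning strategy in the 2-pebble
`ℓ`-round `c`-graded game from the configuration with pebble pair 1 on `p₁` and pebble pair 2
on `p₂` (if placed): she can ensure that the pebble positions always form a partial
isomorphism. -/
def PebbleWin {d : ℕ} (c : ℕ) (M M' : FOModel d) :
    (ℓ : ℕ) → M.W × M'.W → Option (M.W × M'.W) → Prop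
  | 0, p₁, p₂ => PIso M M' p₁ p₂
  | ℓ + 1, p₁, p₂ =>
      PIso M M' p₁ p₂ ∧
      ∀ i : Bool,
        (∀ U : Finset M.W, U.Nonempty → U.card ≤ c →
          ∃ U' : Finset M'.W, U'.card = U.card ∧
            ∀ u' ∈ U', ∃ u ∈ U,
              PebbleWin c M M' ℓ (updCfg p₁ p₂ i (u, u')).1 (updCfg p₁ p₂ i (u, u')).2) ∧
        (∀ U : Finset M'.W, U.Nonempty → U.card ≤ c →
          ∃ U' : Finset M.W, U'.card = U.card ∧
            ∀ u ∈ U', ∃ u' ∈ U,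
              PebbleWin c M M' ℓ (updCfg p₁ p₂ i (u, u')).1 (updCfg p₁ p₂ i (u, u')).2)

end

/-! ### Capped multisets and threshold tests -/

theorem count_capAt {α : Type*} (k : ℕ) (M : Multiset α) (a : α) :
    (M.capAt k).count a = min (M.count a) k := by
  unfold Multiset.capAt
  rw [Multiset.count_bind]
  simp only [Multiset.count_replicate]
  change ∑ b ∈ M.toFinset, (if b = a then min (M.count b) k else 0) = _
  rw [Finset.sum_ite_eq']
  split_ifs with h
  · rfl
  · rw [Multiset.mem_toFinset] at h
    simp [Multiset.count_eq_zero_of_notMem h]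

theorem capAt_le {α : Type*} (k : ℕ) (M : Multiset α) : M.capAt k ≤ M := by
  rw [Multiset.le_iff_count]
  intro a
  rw [count_capAt]
  exact min_le_left _ _

theorem le_countP_capAt {α : Type*} (k : ℕ) (p : α → Prop) (M : Multiset α) :
    k ≤ (M.capAt k).countP p ↔ k ≤ M.countP p := by
  refine ⟨fun h => h.trans (Multiset.countP_le_of_le p (capAt_le k M)), fun h => ?_⟩
  by_cases hbig : ∃ a, p a ∧ k ≤ M.count a
  · obtain ⟨a, ha, hk⟩ := hbig
    calc k = (M.capAt k).count a := by rw [count_capAt, min_eq_right hk]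
      _ = ((M.capAt k).filter p).count a := (Multiset.count_filter_of_pos ha).symm
      _ ≤ ((M.capAt k).filter p).card := Multiset.count_le_card _ _
      _ = (M.capAt k).countP p := (Multiset.countP_eq_card_filter _ _).symm
  · push Not at hbig
    have heq : (M.capAt k).filter p = M.filter p := by
      ext a
      by_cases ha : p a
      · rw [Multiset.count_filter_of_pos ha, Multiset.count_filter_of_pos ha, count_capAt,
          min_eq_left (hbig a ha).le]
      · rw [Multiset.count_filter_of_neg ha, Multiset.count_filter_of_neg ha]
    rwa [Multiset.countP_eq_card_filter, heq, ← Multiset.countP_eq_card_filter]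

/-- The indicator (as a one-dimensional vector) of the event that at least `k` elements of a
multiset, counted with multiplicity, satisfy `p`. -/
noncomputable def threshold {α : Type*} (k : ℕ) (p : α → Prop) (M : Multiset α) : Fin 1 → ℝ :=
  fun _ => if k ≤ M.countP p then 1 else 0

theorem kBounded_threshold {α : Type*} (k : ℕ) (p : α → Prop) :
    KBounded k (threshold k p) := by
  intro M
  funext i
  simp only [threshold, le_countP_capAt]

/-! ### Straight-line programs of formulas -/

/-- The entry `ψ m` is obtained from entries of smaller index by one connective. -/
def IsStep {d : ℕ} (ψ : ℕ → MForm d) (m : ℕ) : Prop :=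
  ∃ i < m, ∃ j < m, ψ m = MForm.neg (ψ i) ∨ ψ m = MForm.and (ψ i) (ψ j) ∨
    (∃ k, ψ m = MForm.dia k (ψ i)) ∨ ∃ k, ψ m = MForm.glob k (ψ i)

/-- The first `n` entries of `ψ` form a program: the propositions, followed by
formulas that each arise from earlier entries by one connective. -/
structure IsProgram {d : ℕ} (ψ : ℕ → MForm d) (n : ℕ) : Prop where
  le : d ≤ n
  props : ∀ i : Fin d, ψ i = MForm.prop i
  step : ∀ m, d ≤ m → m < n → IsStep ψ m

theorem IsStep.congr {d : ℕ} {ψ ψ' : ℕ → MForm d} {m : ℕ} (h : IsStep ψ m)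
    (hψ : ∀ i ≤ m, ψ' i = ψ i) : IsStep ψ' m := by
  obtain ⟨i, hi, j, hj, h⟩ := h
  refine ⟨i, hi, j, hj, ?_⟩
  rwa [hψ m le_rfl, hψ i hi.le, hψ j hj.le]

/-- A program can be prolonged by any formula that is one connective away from its entries. -/
theorem IsProgram.snoc {d : ℕ} {ψ : ℕ → MForm d} {n : ℕ} (h : IsProgram ψ n) (φ : MForm d)
    (hφ : ∃ i < n, ∃ j < n, φ = MForm.neg (ψ i) ∨ φ = MForm.and (ψ i) (ψ j) ∨
      (∃ k, φ = MForm.dia k (ψ i)) ∨ ∃ k, φ = MForm.glob k (ψ i)) :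
    ∃ ψ' n', n ≤ n' ∧ (∀ i < n, ψ' i = ψ i) ∧ IsProgram ψ' n' ∧ ∃ j < n', ψ' j = φ := by
  have hne : ∀ i < n, Function.update ψ n φ i = ψ i := fun i hi =>
    Function.update_of_ne hi.ne _ _
  refine ⟨Function.update ψ n φ, n + 1, n.le_succ, hne, ⟨h.le.trans n.le_succ, ?_, ?_⟩,
    n, n.lt_succ_self, Function.update_self _ _ _⟩
  · intro i
    rw [hne _ (i.2.trans_le h.le), h.props]
  · intro m hdm hm
    rcases (Nat.lt_succ_iff.mp hm).lt_or_eq with hlt | rfl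
    · exact (h.step m hdm hlt).congr fun i hi => hne i (hi.trans_lt hlt)
    · obtain ⟨i, hi, j, hj, hφ⟩ := hφ
      refine ⟨i, hi, j, hj, ?_⟩
      rwa [Function.update_self, hne i hi, hne j hj]

/-- Every program can be prolonged to one that contains a given formula. -/
theorem IsProgram.extend {d : ℕ} (φ : MForm d) : ∀ {ψ : ℕ → MForm d} {n : ℕ},
    IsProgram ψ n →
    ∃ ψ' n', n ≤ n' ∧ (∀ i < n, ψ' i = ψ i) ∧ IsProgram ψ' n' ∧ ∃ j < n', ψ' j = φ := by
  induction φ with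
  | prop p =>
    intro ψ n h
    exact ⟨ψ, n, le_rfl, fun _ _ => rfl, h, p, p.2.trans_le h.le, h.props p⟩
  | neg φ ih =>
    intro ψ n h
    obtain ⟨ψ₁, n₁, hn₁, he₁, h₁, i, hi, rfl⟩ := ih h
    obtain ⟨ψ₂, n₂, hn₂, he₂, h₂⟩ := h₁.snoc _ ⟨i, hi, i, hi, Or.inl rfl⟩
    exact ⟨ψ₂, n₂, hn₁.trans hn₂, fun i hi => (he₂ i (hi.trans_le hn₁)).trans (he₁ i hi), h₂⟩
  | and φ χ ih ih' =>
    intro ψ n h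
    obtain ⟨ψ₁, n₁, hn₁, he₁, h₁, i, hi, rfl⟩ := ih h
    obtain ⟨ψ₂, n₂, hn₂, he₂, h₂, j, hj, rfl⟩ := ih' h₁
    obtain ⟨ψ₃, n₃, hn₃, he₃, h₃⟩ := h₂.snoc (MForm.and (ψ₁ i) (ψ₂ j))
      ⟨i, hi.trans_le hn₂, j, hj, Or.inr (Or.inl (by rw [he₂ i hi]))⟩
    exact ⟨ψ₃, n₃, hn₁.trans (hn₂.trans hn₃), fun i hi =>
      (he₃ i (hi.trans_le (hn₁.trans hn₂))).trans
        ((he₂ i (hi.trans_le hn₁)).trans (he₁ i hi)), h₃⟩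
  | dia k φ ih =>
    intro ψ n h
    obtain ⟨ψ₁, n₁, hn₁, he₁, h₁, i, hi, rfl⟩ := ih h
    obtain ⟨ψ₂, n₂, hn₂, he₂, h₂⟩ :=
      h₁.snoc _ ⟨i, hi, i, hi, Or.inr (Or.inr (Or.inl ⟨k, rfl⟩))⟩
    exact ⟨ψ₂, n₂, hn₁.trans hn₂, fun i hi => (he₂ i (hi.trans_le hn₁)).trans (he₁ i hi), h₂⟩
  | glob k φ ih =>
    intro ψ n h
    obtain ⟨ψ₁, n₁, hn₁, he₁, h₁, i, hi, rfl⟩ := ih h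
    obtain ⟨ψ₂, n₂, hn₂, he₂, h₂⟩ :=
      h₁.snoc _ ⟨i, hi, i, hi, Or.inr (Or.inr (Or.inr ⟨k, rfl⟩))⟩
    exact ⟨ψ₂, n₂, hn₁.trans hn₂, fun i hi => (he₂ i (hi.trans_le hn₁)).trans (he₁ i hi), h₂⟩

theorem exists_isProgram {d : ℕ} (φ : MForm d) :
    ∃ ψ n, IsProgram ψ n ∧ ∃ j < n, ψ j = φ := by
  -- The entries of index at least `d` are irrelevant; `φ` serves as their value.
  have h₀ : IsProgram (fun i => if h : i < d then MForm.prop ⟨i, h⟩ else φ) d :=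
    ⟨le_rfl, fun i => by simp, fun m h h' => absurd h' h.not_gt⟩
  obtain ⟨ψ, n, -, -, h⟩ := h₀.extend φ
  exact ⟨ψ, n, h⟩

/-! ### The layers and the network -/

/-- The 0/1-vector of truth values of `ψ 0, …, ψ (m - 1)` at the node `v`. -/
noncomputable def truthVec {d : ℕ} (ψ : ℕ → MForm d) (m : ℕ) (G : LGraph d) (v : Fin G.n) :
    Fin m → ℝ :=
  fun i => if (LGraph.toKModel G).sat v (ψ i) then 1 else 0

theorem truthVec_eq_one {d : ℕ} (ψ : ℕ → MForm d) {m : ℕ} (G : LGraph d) (v : Fin G.n)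
    (i : Fin m) : truthVec ψ m G v i = 1 ↔ (LGraph.toKModel G).sat v (ψ i) := by
  simp [truthVec]

/-- The threshold test on coordinate `i` counts the nodes of `S` that satisfy `ψ i`. -/
theorem countP_truthVec {d : ℕ} (ψ : ℕ → MForm d) {m : ℕ} (G : LGraph d) (i : Fin m)
    (S : Finset (Fin G.n)) :
    (S.val.map fun w => truthVec ψ m G w).countP (fun x => x i = 1) =
      Nat.card {w : Fin G.n // w ∈ S ∧ (LGraph.toKModel G).sat w (ψ i)} := by
  rw [Multiset.countP_map, Nat.card_eq_fintype_card, Fintype.card_subtype]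
  simp only [truthVec_eq_one]
  rw [← Finset.filter_val, Finset.card_val]
  congr 1
  ext w
  simp

/-- The layer that keeps its input and appends the `0/1` value of `new`, which may depend on
the results of a neighbourhood test and of a global test, both with threshold `k` on
coordinate `i`. -/
noncomputable def stepLayer {m : ℕ} (k : ℕ) (i : Fin m)
    (new : (Fin m → ℝ) → Prop → Prop → Prop) : GNNLayer m (m + 1) where
  m₁ := 1
  m₂ := 1
  agg := threshold k fun x => x i = 1
  aux := threshold k fun x => x i = 1
  comb x y z := Fin.snoc (α := fun _ => ℝ) x (if new x (y 0 = 1) (z 0 = 1) then 1 else 0)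

theorem stepLayer_comb {d : ℕ} (ψ : ℕ → MForm d) {m : ℕ} (k : ℕ) (i : Fin m)
    (new : (Fin m → ℝ) → Prop → Prop → Prop)
    (hnew : ∀ (G : LGraph d) (v : Fin G.n),
      new (truthVec ψ m G v) ((LGraph.toKModel G).sat v (MForm.dia k (ψ i)))
        ((LGraph.toKModel G).sat v (MForm.glob k (ψ i))) ↔ (LGraph.toKModel G).sat v (ψ m))
    (G : LGraph d) (v : Fin G.n) :
    (stepLayer k i new).comb (truthVec ψ m G v)
      ((stepLayer k i new).agg ((G.nbrs v).val.map fun w => truthVec ψ m G w))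
      ((stepLayer k i new).aux ((Finset.univ : Finset (Fin G.n)).val.map
        fun w => truthVec ψ m G w)) = truthVec ψ (m + 1) G v := by
  have h₁ : (threshold k (fun x : Fin m → ℝ => x i = 1)
      ((G.nbrs v).val.map fun w => truthVec ψ m G w) 0 = 1) =
      (LGraph.toKModel G).sat v (MForm.dia k (ψ i)) := by
    simp only [threshold, countP_truthVec, LGraph.nbrs, KModel.sat]
    simp [LGraph.toKModel]
  have h₂ : (threshold k (fun x : Fin m → ℝ => x i = 1)
      ((Finset.univ : Finset (Fin G.n)).val.map fun w => truthVec ψ m G w) 0 = 1) =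
      (LGraph.toKModel G).sat v (MForm.glob k (ψ i)) := by
    simp only [threshold, countP_truthVec, KModel.sat]
    simp [LGraph.toKModel]
  simp only [stepLayer, h₁, h₂]
  funext t
  refine Fin.lastCases ?_ (fun t => ?_) t
  · simp only [Fin.snoc_last, truthVec, Fin.val_last]
    exact if_congr (hnew G v) rfl rfl
  · simp [truthVec]

/-- One instruction of a program is carried out by one bounded ACR layer. -/
theorem exists_layer {d : ℕ} (ψ : ℕ → MForm d) (m : ℕ) (h : IsStep ψ m) :
    ∃ l : GNNLayer m (m + 1), BoundedAgg l.agg ∧ BoundedAgg l.aux ∧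
      ∀ (G : LGraph d) (v : Fin G.n),
        l.comb (truthVec ψ m G v)
          (l.agg ((G.nbrs v).val.map fun w => truthVec ψ m G w))
          (l.aux ((Finset.univ : Finset (Fin G.n)).val.map fun w => truthVec ψ m G w)) =
        truthVec ψ (m + 1) G v := by
  obtain ⟨i, hi, j, hj, h⟩ := h
  suffices hs : ∃ (k : ℕ) (new : (Fin m → ℝ) → Prop → Prop → Prop),
      ∀ (G : LGraph d) (v : Fin G.n),
        new (truthVec ψ m G v) ((LGraph.toKModel G).sat v (MForm.dia k (ψ i)))
        ((LGraph.toKModel G).sat v (MForm.glob k (ψ i))) ↔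
          (LGraph.toKModel G).sat v (ψ m) by
    obtain ⟨k, new, hnew⟩ := hs
    exact ⟨stepLayer k ⟨i, hi⟩ new, ⟨k, kBounded_threshold k _⟩, ⟨k, kBounded_threshold k _⟩,
      stepLayer_comb ψ k ⟨i, hi⟩ new hnew⟩
  rcases h with h | h | ⟨k, h⟩ | ⟨k, h⟩
  · refine ⟨0, fun x _ _ => ¬ x ⟨i, hi⟩ = 1, fun G v => ?_⟩
    beta_reduce
    rw [truthVec_eq_one, h]
    simp only [KModel.sat]
  · refine ⟨0, fun x _ _ => x ⟨i, hi⟩ = 1 ∧ x ⟨j, hj⟩ = 1, fun G v => ?_⟩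
    beta_reduce
    rw [truthVec_eq_one, truthVec_eq_one, h]
    simp only [KModel.sat]
  · exact ⟨k, fun _ y _ => y, fun G v => by rw [h]⟩
  · exact ⟨k, fun _ _ z => z, fun G v => by rw [h]⟩

/-- `GMLC ≤ GNN_b^ACR`: for every graded modal logic with counting classifier
`φ` of dimension `d` there exists a GNN classifier `N_φ` in `GNN_b^ACR` of dimension `d` such
that for every pointed graph `(G,v)` of dimension `d`, `N_φ(G,v) = true` iff `(M_G,v) ⊨ φ`. -/
theorem gmlc_le_gnn_b_acr :
    ∀ (d : ℕ) (φ : MForm d), φ.IsGMLC →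
      ∃ N : GNN d, N.kind = GNNKind.ACR ∧
        (∀ (ℓ : ℕ) (h : ℓ < N.L),
          BoundedAgg (N.layer ℓ h).agg ∧ BoundedAgg (N.layer ℓ h).aux) ∧
        ∀ (G : LGraph d) (v : Fin G.n),
          N.eval G v = true ↔ (LGraph.toKModel G).sat v φ := by
  intro d φ _
  obtain ⟨ψ, n, hP, j, hj, rfl⟩ := exists_isProgram φ
  have hL : d + (n - d) = n := Nat.add_sub_cancel' hP.le
  choose layer hagg haux hlayer using fun (ℓ : ℕ) (h : ℓ < n - d) =>
    exists_layer ψ (d + ℓ) (hP.step (d + ℓ) (Nat.le_add_right d ℓ) (by omega))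
  let N : GNN d :=
    { kind := GNNKind.ACR
      L := n - d
      dims := fun ℓ => d + ℓ
      dims_zero := rfl
      layer := layer
      cls := fun x => decide (x ⟨j, hL.symm ▸ hj⟩ = 1) }
  have hlabel : ∀ (G : LGraph d) (ℓ : ℕ), ℓ ≤ n - d → ∀ v : Fin G.n,
      N.labelAt G ℓ v = truthVec ψ (d + ℓ) G v := by
    intro G ℓ
    induction ℓ with
    | zero =>
      intro _ v
      funext i
      have hi : ψ i = MForm.prop (Fin.cast N.dims_zero i) := hP.props (Fin.cast N.dims_zero i)
      simp only [truthVec, GNN.labelAt, hi, KModel.sat]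
      exact if_congr Iff.rfl rfl rfl
    | succ ℓ ih =>
      intro hℓ v
      have hlt : ℓ < N.L := hℓ
      have ih' := funext (ih (Nat.le_of_succ_le hℓ))
      rw [GNN.labelAt]
      simp only [dif_pos hlt, ih']
      exact hlayer ℓ hlt G v
  refine ⟨N, rfl, fun ℓ h => ⟨hagg ℓ h, haux ℓ h⟩, fun G v => ?_⟩
  rw [GNN.eval, hlabel G N.L le_rfl v]
  change decide (truthVec ψ (d + (n - d)) G v ⟨j, _⟩ = 1) = true ↔ _
  rw [decide_eq_true_iff, truthVec_eq_one]
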